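/- arXiv:2510.25576 — 2 statements merged into one kernel-verified Lean document; each statement's English description precedes it below -/
import Mathlib

section
/- Fix x₀ > 0 and L > 3x₀, let γ be the critical curve with curvature H and normal N = γ̇^⊥, and let λ = 2L/(L+x₀). Let φ ∈ C^∞([0,2L], ℝ) with φ(0) = φ(2L) = 0 and φ̇(0) = φ̇(2L) = 0, set γ_t = γ + tφN, and define G(t) = ∫₀^{2L} |γ̇_t(s)|⁴/⟨γ̇_t(s), γ̈_t(s)^⊥⟩ ds − λ·(1/2)∫₀^{2L} ⟨γ_t(s), γ̇_t(s)^⊥⟩ ds (well defined for |t| small). Then G is twice differentiable at t = 0 and G''(0) = ∫₀^{2L} ((2−λ)H(s)φ(s)² − 2φ̇(s)²/H(s) + 2φ̈(s)²/H(s)³) ds. -/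
open Real Set Filter

noncomputable def sig (x0 L : ℝ) : ℝ := π * Real.sqrt (x0 / (L + x0))

noncomputable def kap (x0 L : ℝ) : ℝ := L / Real.sin (sig x0 L)

noncomputable def Hc (x0 L s : ℝ) : ℝ :=
  π / (sig x0 L * Real.sqrt (kap x0 L ^ 2 - (s - L) ^ 2))

noncomputable def xc (x0 L s : ℝ) : ℝ :=
  -(kap x0 L / 2) *
    ((sig x0 L / (π + sig x0 L)) *
        Real.sin (((π + sig x0 L) / sig x0 L) * Real.arcsin ((s - L) / kap x0 L)) +
      (sig x0 L / (π - sig x0 L)) *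
        Real.sin (((π - sig x0 L) / sig x0 L) * Real.arcsin ((s - L) / kap x0 L)))

noncomputable def yc (x0 L s : ℝ) : ℝ :=
  kap x0 L / 2 *
    ((sig x0 L / (π + sig x0 L)) *
        Real.cos (((π + sig x0 L) / sig x0 L) * Real.arcsin ((s - L) / kap x0 L)) +
      (sig x0 L / (π - sig x0 L)) *
        Real.cos (((π - sig x0 L) / sig x0 L) * Real.arcsin ((s - L) / kap x0 L))) +
  π * x0 / (sig x0 L * Real.tan (sig x0 L))

/-- first component of `φN`, where `N = γ̇^⊥ = (ẏ, −ẋ)` -/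
noncomputable def Pn (x0 L : ℝ) (φ : ℝ → ℝ) (s : ℝ) : ℝ := φ s * deriv (yc x0 L) s

/-- second component of `φN` -/
noncomputable def Qn (x0 L : ℝ) (φ : ℝ → ℝ) (s : ℝ) : ℝ := -φ s * deriv (xc x0 L) s

/-- `G(t) = ∫₀^{2L} |γ̇_t|⁴/⟨γ̇_t, γ̈_t^⊥⟩ ds − λ·(1/2)∫₀^{2L} ⟨γ_t, γ̇_t^⊥⟩ ds`
for `γ_t = γ + tφN` and `λ = 2L/(L+x₀)` -/
noncomputable def Gvar (x0 L : ℝ) (φ : ℝ → ℝ) (t : ℝ) : ℝ :=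
  (∫ s in (0:ℝ)..(2 * L),
    ((deriv (xc x0 L) s + t * deriv (Pn x0 L φ) s) ^ 2 +
        (deriv (yc x0 L) s + t * deriv (Qn x0 L φ) s) ^ 2) ^ 2 /
      ((deriv (xc x0 L) s + t * deriv (Pn x0 L φ) s) *
          (deriv (deriv (yc x0 L)) s + t * deriv (deriv (Qn x0 L φ)) s) -
        (deriv (yc x0 L) s + t * deriv (Qn x0 L φ) s) *
          (deriv (deriv (xc x0 L)) s + t * deriv (deriv (Pn x0 L φ)) s))) -
  2 * L / (L + x0) *
    (1 / 2 * ∫ s in (0:ℝ)..(2 * L),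
      ((xc x0 L s + t * Pn x0 L φ s) * (deriv (yc x0 L) s + t * deriv (Qn x0 L φ) s) -
        (yc x0 L s + t * Qn x0 L φ s) * (deriv (xc x0 L) s + t * deriv (Pn x0 L φ) s)))

/-!
In the moving frame `(T, N)` of a unit speed curve of curvature `H`, the normal variation
`γ_t = γ + tφN` has velocity `γ̇_t = (1 + tφH) T + tφ̇ N`. The energy density is therefore a
rational function of `t` with coefficients in `φ, φ̇, φ̈, H, Ḣ`, and the area density a quadratic
polynomial in `t` with leading coefficient `Hφ²`, so both can be differentiated twice under the
integral sign. The terms with `φφ̈` and `φφ̇Ḣ` combine into `2 (φφ̇/H)˙ - 2φ̇²/H`, whose exact part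
integrates to a boundary term, which is zero when `φ` vanishes at both ends. All this applies to the
critical curve, with tangent angle `π/σ · arcsin((s - L)/κ) + π`, because `L < κ` keeps the
curvature smooth on `[0, 2L]`.
-/

open scoped Topology

section SecondDerivative

variable {𝕜 E : Type*} [NontriviallyNormedField 𝕜] [NormedAddCommGroup E] [NormedSpace 𝕜 E]
  {f g : 𝕜 → E} {f'' g'' : E} {t : 𝕜}

/-- `f` is twice differentiable at `t`, with second derivative `f''` there. Mere differentiability
of `f` is required on a neighbourhood of `t`. -/
def HasSecondDerivAt (f : 𝕜 → E) (f'' : E) (t : 𝕜) : Prop :=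
  ∃ f' : 𝕜 → E, (∀ᶠ r in 𝓝 t, HasDerivAt f (f' r) r) ∧ HasDerivAt f' f'' t

namespace HasSecondDerivAt

lemma deriv_deriv (hf : HasSecondDerivAt f f'' t) : deriv (deriv f) t = f'' := by
  obtain ⟨f', hf', hf''⟩ := hf
  have deriv_eq : deriv f =ᶠ[𝓝 t] f' := hf'.mono fun _ h => h.deriv
  rw [deriv_eq.deriv_eq, hf''.deriv]

lemma congr_deriv (hf : HasSecondDerivAt f f'' t) (h : f'' = g'') : HasSecondDerivAt f g'' t :=
  h ▸ hf

lemma sub (hf : HasSecondDerivAt f f'' t) (hg : HasSecondDerivAt g g'' t) :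
    HasSecondDerivAt (fun r => f r - g r) (f'' - g'') t := by
  obtain ⟨f', hf', hf''⟩ := hf
  obtain ⟨g', hg', hg''⟩ := hg
  exact ⟨fun r => f' r - g' r, (hf'.and hg').mono fun _ h => h.1.fun_sub h.2, hf''.fun_sub hg''⟩

lemma const_smul (c : 𝕜) (hf : HasSecondDerivAt f f'' t) :
    HasSecondDerivAt (fun r => c • f r) (c • f'') t := by
  obtain ⟨f', hf', hf''⟩ := hf
  exact ⟨fun r => c • f' r, hf'.mono fun _ h => h.fun_const_smul c, hf''.fun_const_smul c⟩

end HasSecondDerivAt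

end SecondDerivative

section ParametricIntegral

variable {W E : Type*} [NormedAddCommGroup W] [NormedSpace ℝ W]
  [NormedAddCommGroup E] [NormedSpace ℝ E]
  {F : ℝ × W → E} {Ω : Set (ℝ × W)} {v : ℝ → W} {a b t₀ : ℝ}

lemma eventually_forall_prodMk_mem {T S X : Type*} [TopologicalSpace T] [TopologicalSpace S]
    [TopologicalSpace X] {Ω : Set (T × X)} {K : Set S} {v : S → X} {t₀ : T} (hΩ : IsOpen Ω)
    (hK : IsCompact K) (hv : ContinuousOn v K) (hmem : ∀ s ∈ K, (t₀, v s) ∈ Ω) :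
    ∀ᶠ t in 𝓝 t₀, ∀ s ∈ K, (t, v s) ∈ Ω := by
  have tube : ∀ᶠ t in 𝓝 t₀, ∀ w ∈ v '' K, (t, w) ∈ Ω :=
    (hK.image_of_continuousOn hv).eventually_forall_of_forall_eventually <|
      forall_mem_image.2 fun s hs => hΩ.mem_nhds (hmem s hs)
  exact tube.mono fun t ht s hs => ht (v s) (mem_image_of_mem v hs)

/-- The partial derivative of `F` in its first, real, variable. -/
noncomputable def derivFst (F : ℝ × W → E) (z : ℝ × W) : E :=
  deriv (fun t => F (t, z.2)) z.1

lemma hasDerivAt_prodMk_of_differentiableAt {z : ℝ × W} (hF : DifferentiableAt ℝ F z) :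
    HasDerivAt (fun t => F (t, z.2)) (fderiv ℝ F z (1, 0)) z.1 :=
  hF.hasFDerivAt.comp_hasDerivAt z.1 ((hasDerivAt_id z.1).prodMk (hasDerivAt_const z.1 z.2))

lemma hasDerivAt_derivFst {z : ℝ × W} (hF : DifferentiableAt ℝ F z) :
    HasDerivAt (fun t => F (t, z.2)) (derivFst F z) z.1 :=
  (hasDerivAt_prodMk_of_differentiableAt hF).differentiableAt.hasDerivAt

lemma contDiffOn_derivFst {m n : WithTop ℕ∞} (hΩ : IsOpen Ω) (hF : ContDiffOn ℝ n F Ω)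
    (hmn : m + 1 ≤ n) : ContDiffOn ℝ m (derivFst F) Ω := by
  refine ((hF.fderiv_of_isOpen hΩ hmn).clm_apply
    (contDiffOn_const (c := ((1 : ℝ), (0 : W))))).congr fun z hz => ?_
  have hn : n ≠ 0 := by rintro rfl; simp at hmn
  exact (hasDerivAt_prodMk_of_differentiableAt
    ((hF.differentiableOn hn).differentiableAt (hΩ.mem_nhds hz))).deriv

/-- A compact tube around `{t₀} × v '' [a, b]` inside `Ω` supplies the constant dominating
function for differentiation under the integral sign. -/
lemma hasDerivAt_integral_of_contDiffOn (hΩ : IsOpen Ω) (hF : ContDiffOn ℝ 1 F Ω)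
    (hv : ContinuousOn v (uIcc a b)) (hmem : ∀ s ∈ uIcc a b, (t₀, v s) ∈ Ω) :
    HasDerivAt (fun t => ∫ s in a..b, F (t, v s)) (∫ s in a..b, derivFst F (t₀, v s)) t₀ := by
  obtain ⟨T, hT, hTΩ, hTc⟩ := local_compact_nhds
    (eventually_forall_prodMk_mem hΩ isCompact_uIcc hv hmem)
  have continuousOn_slice {A : ℝ × W → E} (hA : ContinuousOn A Ω) {t : ℝ} (ht : t ∈ T) :
      ContinuousOn (fun s => A (t, v s)) (uIcc a b) :=
    hA.comp (continuousOn_const.prodMk hv) fun s hs => hTΩ ht s hs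
  have continuousOn_deriv : ContinuousOn (derivFst F) Ω :=
    (contDiffOn_derivFst (m := 0) hΩ hF (by simp)).continuousOn
  obtain ⟨C, hC⟩ : ∃ C, ∀ z ∈ T ×ˢ uIcc a b, ‖derivFst F (z.1, v z.2)‖ ≤ C :=
    (hTc.prod isCompact_uIcc).exists_bound_of_continuousOn <| continuousOn_deriv.comp
      (continuousOn_fst.prodMk (hv.comp continuousOn_snd fun z hz => hz.2))
      fun z hz => hTΩ hz.1 z.2 hz.2
  have ht₀ : t₀ ∈ T := mem_of_mem_nhds hT
  have aestronglyMeasurable {A : ℝ → E} (hA : ContinuousOn A (uIcc a b)) :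
      MeasureTheory.AEStronglyMeasurable A (MeasureTheory.volume.restrict (uIoc a b)) :=
    (hA.mono uIoc_subset_uIcc).aestronglyMeasurable measurableSet_uIoc
  refine (intervalIntegral.hasDerivAt_integral_of_dominated_loc_of_deriv_le
    (F := fun t s => F (t, v s)) (F' := fun t s => derivFst F (t, v s))
    (bound := fun _ => C) hT ?_ ?_ ?_ ?_ intervalIntegrable_const ?_).2
  · filter_upwards [hT] with t ht
    exact aestronglyMeasurable (continuousOn_slice hF.continuousOn ht)
  · exact (continuousOn_slice hF.continuousOn ht₀).intervalIntegrable
  · exact aestronglyMeasurable (continuousOn_slice continuousOn_deriv ht₀)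
  · exact .of_forall fun s hs t ht => hC (t, s) ⟨ht, uIoc_subset_uIcc hs⟩
  · refine .of_forall fun s hs t ht => hasDerivAt_derivFst (z := (t, v s)) ?_
    exact (hF.differentiableOn one_ne_zero).differentiableAt
      (hΩ.mem_nhds (hTΩ ht s (uIoc_subset_uIcc hs)))

lemma hasSecondDerivAt_integral_of_contDiffOn (hΩ : IsOpen Ω) (hF : ContDiffOn ℝ 2 F Ω)
    (hv : ContinuousOn v (uIcc a b)) (hmem : ∀ s ∈ uIcc a b, (t₀, v s) ∈ Ω) :
    HasSecondDerivAt (fun t => ∫ s in a..b, F (t, v s))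
      (∫ s in a..b, deriv (deriv fun t => F (t, v s)) t₀) t₀ := by
  refine ⟨fun t => ∫ s in a..b, derivFst F (t, v s), ?_, ?_⟩
  · filter_upwards [eventually_forall_prodMk_mem hΩ isCompact_uIcc hv hmem] with t ht
    exact hasDerivAt_integral_of_contDiffOn hΩ (hF.of_le one_le_two) hv ht
  · exact hasDerivAt_integral_of_contDiffOn hΩ
      (contDiffOn_derivFst hΩ hF (by norm_num [one_add_one_eq_two])) hv hmem

end ParametricIntegral

section FrameIntegrand

lemma hasSecondDerivAt_div {𝕜 : Type*} [NontriviallyNormedField 𝕜] {n n' d d' : 𝕜 → 𝕜}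
    {n'' d'' t : 𝕜} (hn : ∀ᶠ r in 𝓝 t, HasDerivAt n (n' r) r) (hn' : HasDerivAt n' n'' t)
    (hd : ∀ᶠ r in 𝓝 t, HasDerivAt d (d' r) r) (hd' : HasDerivAt d' d'' t) (hdt : d t ≠ 0) :
    HasSecondDerivAt (fun r => n r / d r)
      (n'' / d t - 2 * n' t * d' t / d t ^ 2 - n t * d'' / d t ^ 2 + 2 * n t * d' t ^ 2 / d t ^ 3)
      t := by
  have hnt : HasDerivAt n (n' t) t := hn.self_of_nhds
  have hdt' : HasDerivAt d (d' t) t := hd.self_of_nhds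
  refine ⟨fun r => (n' r * d r - n r * d' r) / d r ^ 2, ?_, ?_⟩
  · filter_upwards [hn, hd, hdt'.continuousAt.eventually_ne hdt] with r hnr hdr hr
    exact hnr.fun_div hdr hr
  · refine (((hn'.fun_mul hdt').fun_sub (hnt.fun_mul hd')).fun_div (hdt'.fun_pow 2)
      (pow_ne_zero 2 hdt)).congr_deriv ?_
    field_simp
    push_cast
    ring

lemma hasDerivAt_quadratic (c₀ c₁ c₂ t : ℝ) :
    HasDerivAt (fun r => c₀ + r * c₁ + r ^ 2 * c₂) (c₁ + 2 * t * c₂) t := by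
  refine ((((hasDerivAt_id' t).mul_const c₁).const_add c₀).fun_add
    ((hasDerivAt_pow 2 t).mul_const c₂)).congr_deriv ?_
  ring

lemma hasDerivAt_deriv_quadratic (c₁ c₂ t : ℝ) :
    HasDerivAt (fun r => c₁ + 2 * r * c₂) (2 * c₂) t := by
  refine ((((hasDerivAt_id' t).const_mul 2).mul_const c₂).const_add c₁).congr_deriv ?_
  ring

lemma hasSecondDerivAt_quadratic (c₀ c₁ c₂ t : ℝ) :
    HasSecondDerivAt (fun r => c₀ + r * c₁ + r ^ 2 * c₂) (2 * c₂) t :=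
  ⟨_, .of_forall (hasDerivAt_quadratic c₀ c₁ c₂), hasDerivAt_deriv_quadratic c₁ c₂ t⟩

/-- The energy density `|γ̇_t|⁴ / ⟨γ̇_t, γ̈_t^⊥⟩` in the moving frame `(T, N)` of a unit speed curve
of curvature `h`, where `γ̇_t = (1 + t p) T + t q N` and `p'`, `q'` are the derivatives of the
coefficients `p`, `q` along the curve. -/
noncomputable def frameIntegrand (p q p' q' h t : ℝ) : ℝ :=
  ((1 + t * p) ^ 2 + (t * q) ^ 2) ^ 2 /
    (h * ((1 + t * p) ^ 2 + (t * q) ^ 2) + t * q * (t * p') - (1 + t * p) * (t * q'))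

lemma hasSecondDerivAt_frameIntegrand (p q p' q' : ℝ) {h : ℝ} (hh : h ≠ 0) :
    HasSecondDerivAt (frameIntegrand p q p' q' h)
      (2 * (p ^ 2 + q ^ 2) / h + 2 * (p * q' - q * p') / h ^ 2 + 2 * q' ^ 2 / h ^ 3) 0 := by
  let c₁ := 2 * p
  let c₂ := p ^ 2 + q ^ 2
  let d₁ := 2 * h * p - q'
  let d₂ := h * (p ^ 2 + q ^ 2) + q * p' - p * q'
  have eq_quadratics : frameIntegrand p q p' q' h =
      fun t => (1 + t * c₁ + t ^ 2 * c₂) ^ 2 / (h + t * d₁ + t ^ 2 * d₂) := by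
    funext t
    simp only [frameIntegrand, c₁, c₂, d₁, d₂]
    congr 1 <;> ring
  have hS := hasDerivAt_quadratic 1 c₁ c₂
  have hD := hasDerivAt_quadratic h d₁ d₂
  rw [eq_quadratics]
  refine (hasSecondDerivAt_div (.of_forall fun t => (hS t).fun_pow 2)
    (((hS 0).fun_pow 1 |>.const_mul 2).fun_mul (hasDerivAt_deriv_quadratic c₁ c₂ 0))
    (.of_forall hD) (hasDerivAt_deriv_quadratic d₁ d₂ 0) (by simpa using hh)).congr_deriv ?_
  have quadratic_zero : h + 0 * d₁ + 0 ^ 2 * d₂ = h := by ring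
  simp only [quadratic_zero, c₁, c₂, d₁, d₂]
  field_simp
  push_cast
  ring

variable {p q p' q' h : ℝ → ℝ} {a b : ℝ}

lemma hasSecondDerivAt_integral_frameIntegrand (hp : ContinuousOn p (uIcc a b))
    (hq : ContinuousOn q (uIcc a b)) (hp' : ContinuousOn p' (uIcc a b))
    (hq' : ContinuousOn q' (uIcc a b)) (hh : ContinuousOn h (uIcc a b))
    (hne : ∀ s ∈ uIcc a b, h s ≠ 0) :
    HasSecondDerivAt (fun t => ∫ s in a..b, frameIntegrand (p s) (q s) (p' s) (q' s) (h s) t)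
      (∫ s in a..b, (2 * (p s ^ 2 + q s ^ 2) / h s + 2 * (p s * q' s - q s * p' s) / h s ^ 2 +
        2 * q' s ^ 2 / h s ^ 3)) 0 := by
  let F (z : ℝ × ℝ × ℝ × ℝ × ℝ × ℝ) : ℝ :=
    frameIntegrand z.2.1 z.2.2.1 z.2.2.2.1 z.2.2.2.2.1 z.2.2.2.2.2 z.1
  let D (z : ℝ × ℝ × ℝ × ℝ × ℝ × ℝ) : ℝ :=
    z.2.2.2.2.2 * ((1 + z.1 * z.2.1) ^ 2 + (z.1 * z.2.2.1) ^ 2) +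
      z.1 * z.2.2.1 * (z.1 * z.2.2.2.1) - (1 + z.1 * z.2.1) * (z.1 * z.2.2.2.2.1)
  have isOpen_ne : IsOpen {z | D z ≠ 0} := isOpen_ne_fun (by fun_prop) continuous_const
  have contDiffOn_F : ContDiffOn ℝ 2 F {z | D z ≠ 0} :=
    ContDiffOn.div (by fun_prop) (by fun_prop) fun z hz => hz
  refine (hasSecondDerivAt_integral_of_contDiffOn isOpen_ne contDiffOn_F
    (hp.prodMk (hq.prodMk (hp'.prodMk (hq'.prodMk hh))))
    fun s hs => by simpa [D] using hne s hs).congr_deriv ?_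
  exact intervalIntegral.integral_congr fun s hs =>
    (hasSecondDerivAt_frameIntegrand _ _ _ _ (hne s hs)).deriv_deriv

lemma hasSecondDerivAt_integral_quadratic {c₀ c₁ c₂ : ℝ → ℝ} (h₀ : ContinuousOn c₀ (uIcc a b))
    (h₁ : ContinuousOn c₁ (uIcc a b)) (h₂ : ContinuousOn c₂ (uIcc a b)) (t₀ : ℝ) :
    HasSecondDerivAt (fun t => ∫ s in a..b, (c₀ s + t * c₁ s + t ^ 2 * c₂ s))
      (∫ s in a..b, 2 * c₂ s) t₀ := by
  let F (z : ℝ × ℝ × ℝ × ℝ) : ℝ := z.2.1 + z.1 * z.2.2.1 + z.1 ^ 2 * z.2.2.2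
  have contDiff_F : ContDiff ℝ 2 F := by fun_prop
  refine (hasSecondDerivAt_integral_of_contDiffOn isOpen_univ contDiff_F.contDiffOn
    (h₀.prodMk (h₁.prodMk h₂)) fun s _ => mem_univ _).congr_deriv ?_
  exact intervalIntegral.integral_congr fun s _ =>
    (hasSecondDerivAt_quadratic (c₀ s) (c₁ s) (c₂ s) t₀).deriv_deriv

end FrameIntegrand

section UnitSpeedCurve

/-- First component of `p T + q N`, where `T = (cos θ, sin θ)` and `N = T^⊥ = (sin θ, -cos θ)`. -/
noncomputable def frameX (θ p q : ℝ → ℝ) (s : ℝ) : ℝ := p s * cos (θ s) + q s * sin (θ s)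

/-- Second component of `p T + q N`, where `T = (cos θ, sin θ)` and `N = T^⊥ = (sin θ, -cos θ)`. -/
noncomputable def frameY (θ p q : ℝ → ℝ) (s : ℝ) : ℝ := p s * sin (θ s) - q s * cos (θ s)

/-- On `U` the plane curve `(x, y)` is parametrized by arc length, with tangent angle `θ` and
curvature `H`. -/
structure HasTangentAngleOn (x y θ H : ℝ → ℝ) (U : Set ℝ) : Prop where
  hasDerivAt_x : ∀ s ∈ U, HasDerivAt x (cos (θ s)) s
  hasDerivAt_y : ∀ s ∈ U, HasDerivAt y (sin (θ s)) s
  hasDerivAt_angle : ∀ s ∈ U, HasDerivAt θ (H s) s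

/-- First component of the normal field `φ N` along the curve `(x, y)`, with `N = (ẏ, -ẋ)`. -/
noncomputable def normalX (y φ : ℝ → ℝ) (s : ℝ) : ℝ := φ s * deriv y s

/-- Second component of the normal field `φ N` along the curve `(x, y)`, with `N = (ẏ, -ẋ)`. -/
noncomputable def normalY (x φ : ℝ → ℝ) (s : ℝ) : ℝ := -φ s * deriv x s

/-- `|γ̇_t|⁴ / ⟨γ̇_t, γ̈_t^⊥⟩` for the normal variation `γ_t = γ + t φ N` of `γ = (x, y)`. -/
noncomputable def energyIntegrand (x y φ : ℝ → ℝ) (t s : ℝ) : ℝ :=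
  ((deriv x s + t * deriv (normalX y φ) s) ^ 2 + (deriv y s + t * deriv (normalY x φ) s) ^ 2) ^ 2 /
    ((deriv x s + t * deriv (normalX y φ) s) *
        (deriv (deriv y) s + t * deriv (deriv (normalY x φ)) s) -
      (deriv y s + t * deriv (normalY x φ) s) *
        (deriv (deriv x) s + t * deriv (deriv (normalX y φ)) s))

/-- `⟨γ_t, γ̇_t^⊥⟩` for the normal variation `γ_t = γ + t φ N` of `γ = (x, y)`. -/
noncomputable def areaIntegrand (x y φ : ℝ → ℝ) (t s : ℝ) : ℝ :=
  (x s + t * normalX y φ s) * (deriv y s + t * deriv (normalY x φ) s) -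
    (y s + t * normalY x φ s) * (deriv x s + t * deriv (normalX y φ) s)

/-- The energy penalized by `lam` times the area, over `[a, b]`, along the normal variation
`γ_t = γ + t φ N` of `γ = (x, y)`. -/
noncomputable def penalizedEnergy (lam a b : ℝ) (x y φ : ℝ → ℝ) (t : ℝ) : ℝ :=
  (∫ s in a..b, energyIntegrand x y φ t s) -
    lam * (1 / 2 * ∫ s in a..b, areaIntegrand x y φ t s)

variable {x y θ H φ p q p' q' f : ℝ → ℝ} {U : Set ℝ} {a b : ℝ}

lemma eqOn_deriv_frameX (hU : IsOpen U) (hθ : ∀ s ∈ U, HasDerivAt θ (H s) s)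
    (hp : ∀ s ∈ U, HasDerivAt p (p' s) s) (hq : ∀ s ∈ U, HasDerivAt q (q' s) s)
    (hf : EqOn f (frameX θ p q) U) :
    EqOn (deriv f) (frameX θ (fun s => p' s + q s * H s) (fun s => q' s - p s * H s)) U := by
  refine (hf.deriv hU).trans fun s hs => ?_
  refine (((hp s hs).fun_mul (hθ s hs).cos).fun_add
    ((hq s hs).fun_mul (hθ s hs).sin)).deriv.trans ?_
  simp only [frameX]
  ring

lemma eqOn_deriv_frameY (hU : IsOpen U) (hθ : ∀ s ∈ U, HasDerivAt θ (H s) s)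
    (hp : ∀ s ∈ U, HasDerivAt p (p' s) s) (hq : ∀ s ∈ U, HasDerivAt q (q' s) s)
    (hf : EqOn f (frameY θ p q) U) :
    EqOn (deriv f) (frameY θ (fun s => p' s + q s * H s) (fun s => q' s - p s * H s)) U := by
  refine (hf.deriv hU).trans fun s hs => ?_
  refine (((hp s hs).fun_mul (hθ s hs).sin).fun_sub
    ((hq s hs).fun_mul (hθ s hs).cos)).deriv.trans ?_
  simp only [frameY]
  ring

namespace HasTangentAngleOn

variable (hγ : HasTangentAngleOn x y θ H U)
include hγ

lemma eqOn_deriv_x : EqOn (deriv x) (frameX θ 1 0) U := fun s hs => by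
  simp [(hγ.hasDerivAt_x s hs).deriv, frameX]

lemma eqOn_deriv_y : EqOn (deriv y) (frameY θ 1 0) U := fun s hs => by
  simp [(hγ.hasDerivAt_y s hs).deriv, frameY]

lemma eqOn_normalX : EqOn (normalX y φ) (frameX θ 0 φ) U := fun s hs => by
  simp [normalX, (hγ.hasDerivAt_y s hs).deriv, frameX]

lemma eqOn_normalY : EqOn (normalY x φ) (frameY θ 0 φ) U := fun s hs => by
  simp [normalY, (hγ.hasDerivAt_x s hs).deriv, frameY]

lemma eqOn_deriv_deriv_x (hU : IsOpen U) : EqOn (deriv (deriv x)) (frameX θ 0 (-H)) U := by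
  refine (eqOn_deriv_frameX hU hγ.hasDerivAt_angle (fun s _ => hasDerivAt_const s 1)
    (fun s _ => hasDerivAt_const s 0) hγ.eqOn_deriv_x).trans fun s _ => ?_
  simp [frameX]

lemma eqOn_deriv_deriv_y (hU : IsOpen U) : EqOn (deriv (deriv y)) (frameY θ 0 (-H)) U := by
  refine (eqOn_deriv_frameY hU hγ.hasDerivAt_angle (fun s _ => hasDerivAt_const s 1)
    (fun s _ => hasDerivAt_const s 0) hγ.eqOn_deriv_y).trans fun s _ => ?_
  simp [frameY]

lemma eqOn_deriv_normalX (hU : IsOpen U) (hφ : DifferentiableOn ℝ φ U) :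
    EqOn (deriv (normalX y φ)) (frameX θ (φ * H) (deriv φ)) U := by
  refine (eqOn_deriv_frameX hU hγ.hasDerivAt_angle (fun s _ => hasDerivAt_const s 0)
    (fun s hs => (hφ.differentiableAt (hU.mem_nhds hs)).hasDerivAt)
    hγ.eqOn_normalX).trans fun s _ => ?_
  simp [frameX]

lemma eqOn_deriv_normalY (hU : IsOpen U) (hφ : DifferentiableOn ℝ φ U) :
    EqOn (deriv (normalY x φ)) (frameY θ (φ * H) (deriv φ)) U := by
  refine (eqOn_deriv_frameY hU hγ.hasDerivAt_angle (fun s _ => hasDerivAt_const s 0)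
    (fun s hs => (hφ.differentiableAt (hU.mem_nhds hs)).hasDerivAt)
    hγ.eqOn_normalY).trans fun s _ => ?_
  simp [frameY]

/-- The rotation `(T, N)` of the plane drops out, leaving only frame coefficients. -/
lemma energyIntegrand_eq (hU : IsOpen U) (hH : DifferentiableOn ℝ H U)
    (hφ : DifferentiableOn ℝ φ U) (hφ' : DifferentiableOn ℝ (deriv φ) U) (t : ℝ) :
    EqOn (energyIntegrand x y φ t)
      (fun s => frameIntegrand (φ s * H s) (deriv φ s) (deriv φ s * H s + φ s * deriv H s)
        (deriv (deriv φ) s) (H s) t) U := by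
  intro s hs
  have hasDerivAt_of {g : ℝ → ℝ} (hg : DifferentiableOn ℝ g U) (r : ℝ) (hr : r ∈ U) :
      HasDerivAt g (deriv g r) r := (hg.differentiableAt (hU.mem_nhds hr)).hasDerivAt
  have hφH (r : ℝ) (hr : r ∈ U) := (hasDerivAt_of hφ r hr).mul (hasDerivAt_of hH r hr)
  have hX := eqOn_deriv_frameX hU hγ.hasDerivAt_angle hφH (hasDerivAt_of hφ')
    (hγ.eqOn_deriv_normalX hU hφ) hs
  have hY := eqOn_deriv_frameY hU hγ.hasDerivAt_angle hφH (hasDerivAt_of hφ')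
    (hγ.eqOn_deriv_normalY hU hφ) hs
  have hunit := cos_sq_add_sin_sq (θ s)
  simp only [energyIntegrand, frameIntegrand, hγ.eqOn_deriv_x hs, hγ.eqOn_deriv_y hs,
    hγ.eqOn_deriv_deriv_x hU hs, hγ.eqOn_deriv_deriv_y hU hs, hγ.eqOn_deriv_normalX hU hφ hs,
    hγ.eqOn_deriv_normalY hU hφ hs, hX, hY, frameX, frameY, Pi.mul_apply, Pi.neg_apply,
    Pi.one_apply, Pi.zero_apply]
  set speedSq := (1 + t * (φ s * H s)) ^ 2 + (t * deriv φ s) ^ 2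
  congr 1
  · congr 1
    linear_combination speedSq * hunit
  · linear_combination (H s * speedSq +
      t * deriv φ s * (t * (deriv φ s * H s + φ s * deriv H s)) -
      (1 + t * (φ s * H s)) * (t * deriv (deriv φ) s)) * hunit

lemma areaIntegrand_eq (hU : IsOpen U) (hφ : DifferentiableOn ℝ φ U) (t : ℝ) :
    EqOn (areaIntegrand x y φ t)
      (fun s => (x s * sin (θ s) - y s * cos (θ s)) +
        t * (φ s + x s * frameY θ (φ * H) (deriv φ) s - y s * frameX θ (φ * H) (deriv φ) s) +
        t ^ 2 * (φ s ^ 2 * H s)) U := by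
  intro s hs
  have hunit := cos_sq_add_sin_sq (θ s)
  simp only [areaIntegrand, hγ.eqOn_deriv_x hs, hγ.eqOn_deriv_y hs, hγ.eqOn_normalX hs,
    hγ.eqOn_normalY hs, hγ.eqOn_deriv_normalX hU hφ hs, hγ.eqOn_deriv_normalY hU hφ hs, frameX,
    frameY, Pi.mul_apply, Pi.one_apply, Pi.zero_apply]
  linear_combination (t * φ s + t ^ 2 * φ s ^ 2 * H s) * hunit

end HasTangentAngleOn

section SecondVariation

variable (hU : IsOpen U) (hab : uIcc a b ⊆ U) (hH : ContDiffOn ℝ 1 H U)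
  (hφ : ContDiffOn ℝ 2 φ U)

include hU hab hφ in
lemma continuousOn_jet :
    ContinuousOn φ (uIcc a b) ∧ ContinuousOn (deriv φ) (uIcc a b) ∧
      ContinuousOn (deriv (deriv φ)) (uIcc a b) := by
  have hφ' : ContDiffOn ℝ 1 (deriv φ) U := hφ.deriv_of_isOpen hU (by norm_num)
  exact ⟨hφ.continuousOn.mono hab, hφ'.continuousOn.mono hab,
    (hφ'.continuousOn_deriv_of_isOpen hU le_rfl).mono hab⟩

include hU hab hH hφ

lemma integral_deriv_mul_deriv_div (hne : ∀ s ∈ uIcc a b, H s ≠ 0) :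
    ∫ s in a..b, ((deriv φ s ^ 2 + φ s * deriv (deriv φ) s) / H s -
        φ s * deriv φ s * deriv H s / H s ^ 2) =
      φ b * deriv φ b / H b - φ a * deriv φ a / H a := by
  have hφ' : ContDiffOn ℝ 1 (deriv φ) U := hφ.deriv_of_isOpen hU (by norm_num)
  have hasDerivAt_of {g : ℝ → ℝ} (hg : ContDiffOn ℝ 1 g U) {s : ℝ} (hs : s ∈ uIcc a b) :
      HasDerivAt g (deriv g s) s :=
    ((hg.differentiableOn one_ne_zero).differentiableAt (hU.mem_nhds (hab hs))).hasDerivAt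
  have contDiffOn_quotient : ContDiffOn ℝ 1 (fun s => φ s * deriv φ s / H s) (uIcc a b) :=
    (((hφ.of_le one_le_two).mul hφ').mono hab).div (hH.mono hab) hne
  rw [← intervalIntegral.integral_deriv_of_contDiffOn_uIcc contDiffOn_quotient]
  refine intervalIntegral.integral_congr fun s hs => ?_
  have hHs := hne s hs
  rw [(((hasDerivAt_of (hφ.of_le one_le_two) hs).fun_mul (hasDerivAt_of hφ' hs)).fun_div
    (hasDerivAt_of hH hs) hHs).deriv]
  field_simp

/-- The cross term `2 φ φ̈ / H - 2 φ φ̇ Ḣ / H²` of the pointwise second derivative is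
`2 (φ φ̇ / H)˙ - 2 φ̇² / H`. -/
lemma integral_frame_second_deriv_eq (hne : ∀ s ∈ uIcc a b, H s ≠ 0) :
    ∫ s in a..b, (2 * ((φ s * H s) ^ 2 + deriv φ s ^ 2) / H s +
        2 * (φ s * H s * deriv (deriv φ) s -
          deriv φ s * (deriv φ s * H s + φ s * deriv H s)) / H s ^ 2 +
        2 * deriv (deriv φ) s ^ 2 / H s ^ 3) =
      (∫ s in a..b, (2 * H s * φ s ^ 2 - 2 * deriv φ s ^ 2 / H s +
        2 * deriv (deriv φ) s ^ 2 / H s ^ 3)) +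
      2 * (φ b * deriv φ b / H b - φ a * deriv φ a / H a) := by
  obtain ⟨hc, hc', hc''⟩ := continuousOn_jet hU hab hφ
  have hHc : ContinuousOn H (uIcc a b) := hH.continuousOn.mono hab
  have hHc' : ContinuousOn (deriv H) (uIcc a b) :=
    (hH.continuousOn_deriv_of_isOpen hU le_rfl).mono hab
  have hpow (n : ℕ) : ∀ s ∈ uIcc a b, H s ^ n ≠ 0 := fun s hs => pow_ne_zero n (hne s hs)
  rw [← integral_deriv_mul_deriv_div hU hab hH hφ hne, ← intervalIntegral.integral_const_mul,
    ← intervalIntegral.integral_add]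
  · refine intervalIntegral.integral_congr fun s hs => ?_
    have hHs := hne s hs
    field_simp
    ring
  · exact ContinuousOn.intervalIntegrable (by fun_prop (disch := first | exact hne | exact hpow _))
  · exact ContinuousOn.intervalIntegrable (by fun_prop (disch := first | exact hne | exact hpow _))

namespace HasTangentAngleOn

variable (hγ : HasTangentAngleOn x y θ H U)
include hγ

lemma hasSecondDerivAt_integral_energyIntegrand (hne : ∀ s ∈ uIcc a b, H s ≠ 0) :
    HasSecondDerivAt (fun t => ∫ s in a..b, energyIntegrand x y φ t s)
      ((∫ s in a..b, (2 * H s * φ s ^ 2 - 2 * deriv φ s ^ 2 / H s +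
          2 * deriv (deriv φ) s ^ 2 / H s ^ 3)) +
        2 * (φ b * deriv φ b / H b - φ a * deriv φ a / H a)) 0 := by
  obtain ⟨hc, hc', hc''⟩ := continuousOn_jet hU hab hφ
  have hφ' : ContDiffOn ℝ 1 (deriv φ) U := hφ.deriv_of_isOpen hU (by norm_num)
  have hHc : ContinuousOn H (uIcc a b) := hH.continuousOn.mono hab
  have hHc' : ContinuousOn (deriv H) (uIcc a b) :=
    (hH.continuousOn_deriv_of_isOpen hU le_rfl).mono hab
  have in_frame (t : ℝ) := intervalIntegral.integral_congr (μ := MeasureTheory.volume) <|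
    (hγ.energyIntegrand_eq hU (hH.differentiableOn one_ne_zero) (hφ.differentiableOn two_ne_zero)
      (hφ'.differentiableOn one_ne_zero) t).mono hab
  simp only [in_frame]
  exact (hasSecondDerivAt_integral_frameIntegrand (hc.mul hHc) hc'
    ((hc'.mul hHc).add (hc.mul hHc')) hc'' hHc hne).congr_deriv
    (integral_frame_second_deriv_eq hU hab hH hφ hne)

lemma hasSecondDerivAt_integral_areaIntegrand :
    HasSecondDerivAt (fun t => ∫ s in a..b, areaIntegrand x y φ t s)
      (∫ s in a..b, 2 * (φ s ^ 2 * H s)) 0 := by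
  obtain ⟨hc, hc', -⟩ := continuousOn_jet hU hab hφ
  have hHc : ContinuousOn H (uIcc a b) := hH.continuousOn.mono hab
  have continuousOn_of {g g' : ℝ → ℝ} (hg : ∀ s ∈ U, HasDerivAt g (g' s) s) :
      ContinuousOn g (uIcc a b) := HasDerivAt.continuousOn fun s hs => hg s (hab hs)
  have hx := continuousOn_of hγ.hasDerivAt_x
  have hy := continuousOn_of hγ.hasDerivAt_y
  have hθ := continuousOn_of hγ.hasDerivAt_angle
  have as_quadratic (t : ℝ) := intervalIntegral.integral_congr (μ := MeasureTheory.volume) <|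
    (hγ.areaIntegrand_eq hU (hφ.differentiableOn two_ne_zero) t).mono hab
  simp only [as_quadratic]
  refine hasSecondDerivAt_integral_quadratic (by fun_prop) ?_ (by fun_prop) 0
  unfold frameX frameY
  fun_prop

theorem hasSecondDerivAt_penalizedEnergy (hne : ∀ s ∈ uIcc a b, H s ≠ 0) (lam : ℝ) :
    HasSecondDerivAt (penalizedEnergy lam a b x y φ)
      ((∫ s in a..b, ((2 - lam) * H s * φ s ^ 2 - 2 * deriv φ s ^ 2 / H s +
          2 * deriv (deriv φ) s ^ 2 / H s ^ 3)) +
        2 * (φ b * deriv φ b / H b - φ a * deriv φ a / H a)) 0 := by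
  have henergy := hγ.hasSecondDerivAt_integral_energyIntegrand hU hab hH hφ hne
  have harea := hγ.hasSecondDerivAt_integral_areaIntegrand hU hab hH hφ
  refine (henergy.sub ((harea.const_smul (1 / 2)).const_smul lam)).congr_deriv ?_
  obtain ⟨hc, hc', hc''⟩ := continuousOn_jet hU hab hφ
  have hHc : ContinuousOn H (uIcc a b) := hH.continuousOn.mono hab
  have hpow (n : ℕ) : ∀ s ∈ uIcc a b, H s ^ n ≠ 0 := fun s hs => pow_ne_zero n (hne s hs)
  rw [add_sub_right_comm, smul_eq_mul, smul_eq_mul, ← intervalIntegral.integral_const_mul,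
    ← intervalIntegral.integral_const_mul, ← intervalIntegral.integral_sub]
  · congr 2 with s
    ring
  · exact ContinuousOn.intervalIntegrable (by fun_prop (disch := first | exact hne | exact hpow _))
  · exact ContinuousOn.intervalIntegrable (by fun_prop)

end HasTangentAngleOn

end SecondVariation

end UnitSpeedCurve

section CriticalCurve

lemma sub_sq_lt_sq_of_mem_Ioo {c k s : ℝ} (hs : s ∈ Ioo (c - k) (c + k)) :
    (s - c) ^ 2 < k ^ 2 :=
  sq_lt_sq' (by linarith [hs.1]) (by linarith [hs.2])

lemma sqrt_one_sub_div_sq {k : ℝ} (hk : 0 < k) (u : ℝ) :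
    √(1 - (u / k) ^ 2) = √(k ^ 2 - u ^ 2) / k := by
  rw [div_pow, one_sub_div (pow_ne_zero 2 hk.ne'), sqrt_div' _ (sq_nonneg k), sqrt_sq hk.le]

lemma hasDerivAt_arcsin_sub_div {c k s : ℝ} (hs : s ∈ Ioo (c - k) (c + k)) :
    HasDerivAt (fun r => arcsin ((r - c) / k)) (1 / √(k ^ 2 - (s - c) ^ 2)) s := by
  have hk : 0 < k := by linarith [hs.1.trans hs.2]
  have lower : (s - c) / k ≠ -1 := by
    rw [Ne, div_eq_iff hk.ne']
    linarith [hs.1]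
  have upper : (s - c) / k ≠ 1 := by
    rw [Ne, div_eq_iff hk.ne']
    linarith [hs.2]
  refine ((hasDerivAt_arcsin lower upper).comp s
    (((hasDerivAt_id' s).sub_const c).div_const k)).congr_deriv ?_
  rw [sqrt_one_sub_div_sq hk]
  field_simp

lemma cos_arcsin_div {k : ℝ} (hk : 0 < k) (u : ℝ) :
    cos (arcsin (u / k)) = √(k ^ 2 - u ^ 2) / k := by
  rw [cos_arcsin, sqrt_one_sub_div_sq hk]

/-- The tangent angle of the critical curve. The summand `π` is its value at the midpoint `s = L`,
where the curve runs in the direction of decreasing `x`. -/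
noncomputable def criticalAngle (x0 L s : ℝ) : ℝ :=
  π / sig x0 L * arcsin ((s - L) / kap x0 L) + π

variable {x0 L s : ℝ}

lemma hasDerivAt_criticalAngle (hs : s ∈ Ioo (L - kap x0 L) (L + kap x0 L)) :
    HasDerivAt (criticalAngle x0 L) (Hc x0 L s) s := by
  refine (((hasDerivAt_arcsin_sub_div hs).const_mul (π / sig x0 L)).add_const π).congr_deriv ?_
  rw [Hc, div_mul_div_comm, mul_one]

lemma pi_add_sig_div_mul (hσ : sig x0 L ≠ 0) (u : ℝ) :
    (π + sig x0 L) / sig x0 L * u = π / sig x0 L * u + u := by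
  rw [add_div, div_self hσ, add_mul, one_mul]

lemma pi_sub_sig_div_mul (hσ : sig x0 L ≠ 0) (u : ℝ) :
    (π - sig x0 L) / sig x0 L * u = π / sig x0 L * u - u := by
  rw [sub_div, div_self hσ, sub_mul, one_mul]

lemma hasDerivAt_xc (hσ : 0 < sig x0 L) (hσπ : sig x0 L < π)
    (hs : s ∈ Ioo (L - kap x0 L) (L + kap x0 L)) :
    HasDerivAt (xc x0 L) (cos (criticalAngle x0 L s)) s := by
  have hκ : 0 < kap x0 L := by linarith [hs.1.trans hs.2]
  have sqrt_ne_zero := (sqrt_pos.2 (sub_pos.2 (sub_sq_lt_sq_of_mem_Ioo hs))).ne'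
  have hu := hasDerivAt_arcsin_sub_div hs
  have add_ne_zero : π + sig x0 L ≠ 0 := by positivity
  have sub_ne_zero : π - sig x0 L ≠ 0 := (sub_pos.2 hσπ).ne'
  refine ((((hu.const_mul ((π + sig x0 L) / sig x0 L)).sin.const_mul
    (sig x0 L / (π + sig x0 L))).add ((hu.const_mul ((π - sig x0 L) / sig x0 L)).sin.const_mul
    (sig x0 L / (π - sig x0 L)))).const_mul (-(kap x0 L / 2))).congr_deriv ?_
  rw [pi_add_sig_div_mul hσ.ne', pi_sub_sig_div_mul hσ.ne', cos_add, cos_sub,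
    cos_arcsin_div hκ, criticalAngle, cos_add_pi]
  field_simp
  ring

lemma hasDerivAt_yc (hσ : 0 < sig x0 L) (hσπ : sig x0 L < π)
    (hs : s ∈ Ioo (L - kap x0 L) (L + kap x0 L)) :
    HasDerivAt (yc x0 L) (sin (criticalAngle x0 L s)) s := by
  have hκ : 0 < kap x0 L := by linarith [hs.1.trans hs.2]
  have sqrt_ne_zero := (sqrt_pos.2 (sub_pos.2 (sub_sq_lt_sq_of_mem_Ioo hs))).ne'
  have hu := hasDerivAt_arcsin_sub_div hs
  have add_ne_zero : π + sig x0 L ≠ 0 := by positivity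
  have sub_ne_zero : π - sig x0 L ≠ 0 := (sub_pos.2 hσπ).ne'
  refine (((((hu.const_mul ((π + sig x0 L) / sig x0 L)).cos.const_mul
    (sig x0 L / (π + sig x0 L))).add ((hu.const_mul ((π - sig x0 L) / sig x0 L)).cos.const_mul
    (sig x0 L / (π - sig x0 L)))).const_mul (kap x0 L / 2)).add_const
    (π * x0 / (sig x0 L * tan (sig x0 L)))).congr_deriv ?_
  rw [pi_add_sig_div_mul hσ.ne', pi_sub_sig_div_mul hσ.ne', sin_add, sin_sub,
    cos_arcsin_div hκ, criticalAngle, sin_add_pi]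
  field_simp
  ring

lemma hasTangentAngleOn_critical (hσ : 0 < sig x0 L) (hσπ : sig x0 L < π) :
    HasTangentAngleOn (xc x0 L) (yc x0 L) (criticalAngle x0 L) (Hc x0 L)
      (Ioo (L - kap x0 L) (L + kap x0 L)) where
  hasDerivAt_x _ hs := hasDerivAt_xc hσ hσπ hs
  hasDerivAt_y _ hs := hasDerivAt_yc hσ hσπ hs
  hasDerivAt_angle _ hs := hasDerivAt_criticalAngle hs

lemma contDiffOn_Hc (hσ : sig x0 L ≠ 0) {n : WithTop ℕ∞} :
    ContDiffOn ℝ n (Hc x0 L) (Ioo (L - kap x0 L) (L + kap x0 L)) := by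
  have radicand_ne (s : ℝ) (hs : s ∈ Ioo (L - kap x0 L) (L + kap x0 L)) :
      kap x0 L ^ 2 - (s - L) ^ 2 ≠ 0 := (sub_pos.2 (sub_sq_lt_sq_of_mem_Ioo hs)).ne'
  have hsqrt : ContDiffOn ℝ n (fun s => √(kap x0 L ^ 2 - (s - L) ^ 2))
      (Ioo (L - kap x0 L) (L + kap x0 L)) := ContDiffOn.sqrt (by fun_prop) radicand_ne
  exact contDiffOn_const.div (contDiffOn_const.mul hsqrt) fun s hs =>
    mul_ne_zero hσ (sqrt_ne_zero'.2 (sub_pos.2 (sub_sq_lt_sq_of_mem_Ioo hs)))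

lemma Hc_pos (hσ : 0 < sig x0 L) (hs : s ∈ Ioo (L - kap x0 L) (L + kap x0 L)) :
    0 < Hc x0 L s :=
  div_pos pi_pos (mul_pos hσ (sqrt_pos.2 (sub_pos.2 (sub_sq_lt_sq_of_mem_Ioo hs))))

lemma sig_pos (hx0 : 0 < x0) (hL : 0 < L) : 0 < sig x0 L :=
  mul_pos pi_pos (sqrt_pos.2 (by positivity))

lemma sig_lt_pi (hx0 : 0 < x0) (hL : 0 < L) : sig x0 L < π := by
  have ratio_lt_one : x0 / (L + x0) < 1 := by
    rw [div_lt_one (by positivity)]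
    linarith
  have hsqrt : √(x0 / (L + x0)) < 1 := (sqrt_lt' one_pos).2 (by simpa using ratio_lt_one)
  exact mul_lt_of_lt_one_right pi_pos hsqrt

lemma sig_ne_pi_div_two (hx0 : 0 < x0) (hL : 0 < L) (hne : L ≠ 3 * x0) : sig x0 L ≠ π / 2 := by
  intro h
  have hsqrt : √(x0 / (L + x0)) = 1 / 2 := mul_left_cancel₀ pi_ne_zero (by rw [← sig, h]; ring)
  have hratio : x0 / (L + x0) = (1 / 2) ^ 2 := by
    rw [← hsqrt, sq_sqrt (by positivity)]
  rw [div_eq_iff (by positivity)] at hratio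
  exact hne (by linarith)

lemma lt_kap (hx0 : 0 < x0) (hL : 0 < L) (hne : L ≠ 3 * x0) : L < kap x0 L := by
  have hσ := sig_pos hx0 hL
  have hσπ := sig_lt_pi hx0 hL
  have cos_ne_zero : cos (sig x0 L) ≠ 0 := fun h => sig_ne_pi_div_two hx0 hL hne <|
    injOn_cos ⟨hσ.le, hσπ.le⟩ ⟨by positivity, by linarith⟩ (h.trans cos_pi_div_two.symm)
  have sin_lt_one : sin (sig x0 L) < 1 := by
    nlinarith [sin_sq_add_cos_sq (sig x0 L), sq_pos_of_ne_zero cos_ne_zero]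
  rw [kap, lt_div_iff₀ (sin_pos_of_pos_of_lt_pi hσ hσπ)]
  exact mul_lt_of_lt_one_right hL sin_lt_one

end CriticalCurve

theorem statement12_general {x0 L : ℝ} (hx0 : 0 < x0) (hL : 0 < L) (hne : L ≠ 3 * x0) {φ : ℝ → ℝ}
    (hφ : ContDiff ℝ 2 φ) :
    HasSecondDerivAt (Gvar x0 L φ)
      ((∫ s in (0:ℝ)..(2 * L),
          ((2 - 2 * L / (L + x0)) * Hc x0 L s * φ s ^ 2 -
            2 * deriv φ s ^ 2 / Hc x0 L s +
            2 * deriv (deriv φ) s ^ 2 / Hc x0 L s ^ 3)) +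
        2 * (φ (2 * L) * deriv φ (2 * L) / Hc x0 L (2 * L) - φ 0 * deriv φ 0 / Hc x0 L 0)) 0 := by
  have hσ := sig_pos hx0 hL
  have hLκ := lt_kap hx0 hL hne
  have hsub : uIcc 0 (2 * L) ⊆ Ioo (L - kap x0 L) (L + kap x0 L) := by
    rw [uIcc_of_le (by positivity)]
    exact Icc_subset_Ioo (by linarith) (by linarith)
  exact (hasTangentAngleOn_critical hσ (sig_lt_pi hx0 hL)).hasSecondDerivAt_penalizedEnergy
    isOpen_Ioo hsub (contDiffOn_Hc hσ.ne') hφ.contDiffOn (fun s hs => (Hc_pos hσ (hsub hs)).ne')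
    (2 * L / (L + x0))

/-- second variation of the penalized functional `F − λA` at the critical curve,
for a normal geodesic variation `γ_t = γ + tφN`. -/
theorem statement12 (x0 L : ℝ) (hx0 : 0 < x0) (hL : 3 * x0 < L) (φ : ℝ → ℝ)
    (hφ : ContDiff ℝ (⊤ : ℕ∞) φ)
    (hb0 : φ 0 = 0) (hb1 : φ (2 * L) = 0)
    (hb2 : deriv φ 0 = 0) (hb3 : deriv φ (2 * L) = 0) :
    ∃ G' : ℝ → ℝ,
      (∀ᶠ t in nhds (0:ℝ), HasDerivAt (Gvar x0 L φ) (G' t) t) ∧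
      HasDerivAt G'
        (∫ s in (0:ℝ)..(2 * L),
          ((2 - 2 * L / (L + x0)) * Hc x0 L s * φ s ^ 2 -
            2 * deriv φ s ^ 2 / Hc x0 L s +
            2 * deriv (deriv φ) s ^ 2 / Hc x0 L s ^ 3))
        0 := by
  simpa [hb0, hb1, HasSecondDerivAt] using
    statement12_general hx0 (by linarith) hL.ne' (contDiff_infty.1 hφ 2)
end

section
/- Fix x₀ > 0 and L > 3x₀ and let H, θ, λ be the associated critical data. Set μ₀ = −x₀/(L+x₀) + 2√(x₀/(L+x₀)) and α = (x₀/(L+x₀))^{1/4}. Then the functions u₃(s) = θ(s)·sin(α·θ(s)) and u₄(s) = θ(s)·cos(α·θ(s)) satisfy the homogeneous fourth-order equation (d²/ds²)(2H(s)⁻³·ü(s)) + μ₀·(d/ds)(2H(s)⁻¹·u̇(s)) + (2−λ)H(s)u(s) = 0 for all s ∈ (0,2L). -/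
open Real Set

/-- the angle function `θ(s) = (π/σ)(arcsin((s−L)/κ) + σ)` -/
noncomputable def th (x0 L s : ℝ) : ℝ :=
  π / sig x0 L * (Real.arcsin ((s - L) / kap x0 L) + sig x0 L)

/-- the fourth order operator `Lu = (2H⁻³ü)'' + μ(2H⁻¹u̇)' + (2−λ)Hu`,
with `λ = 2L/(L+x₀)` -/
noncomputable def Lop (x0 L μ : ℝ) (u : ℝ → ℝ) (s : ℝ) : ℝ :=
  deriv (deriv fun t => 2 / Hc x0 L t ^ 3 * deriv (deriv u) t) s +
    μ * deriv (fun t => 2 / Hc x0 L t * deriv u t) s +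
    (2 - 2 * L / (L + x0)) * Hc x0 L s * u s

/-!
In the variable `θ` the operator has constant coefficients: since `θ' = H` and `(H⁻²)'' = λ - 2`,
writing `c = x₀/(L+x₀) = 1 - λ/2` one gets
`Lop (f ∘ θ) = 2H · (f⁗ + (c + μ) f'' + c f) ∘ θ`.
At `μ = μ₀` the characteristic polynomial is `X⁴ + 2√c X² + c = (X² + α²)²`, whose double roots
`±iα` account for the resonant solutions `x sin (αx)` and `x cos (αx)`.
-/

section IteratedDeriv

variable {𝕜 : Type*} [NontriviallyNormedField 𝕜]

lemma iteratedDeriv_succ_id_mul {g : 𝕜 → 𝕜} (n : ℕ) (hg : ContDiff 𝕜 (n + 1) g) (x : 𝕜) :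
    iteratedDeriv (n + 1) (fun y => y * g y) x =
      x * iteratedDeriv (n + 1) g x + (n + 1) * iteratedDeriv n g x := by
  have hg' : ContDiffAt 𝕜 (n + 1 : ℕ) g x := by exact_mod_cast hg.contDiffAt
  rw [iteratedDeriv_fun_mul contDiffAt_fun_id hg', Finset.sum_range_succ', Finset.sum_range_succ']
  simp [iteratedDeriv_fun_id, add_comm]

lemma iteratedDeriv_add_two_of_iteratedDeriv_two_eq {g : 𝕜 → 𝕜} {b : 𝕜}
    (hg : iteratedDeriv 2 g = fun x => b * g x) (n : ℕ) (x : 𝕜) :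
    iteratedDeriv (n + 2) g x = b * iteratedDeriv n g x := by
  rw [iteratedDeriv_eq_iterate, Function.iterate_add_apply, ← iteratedDeriv_eq_iterate,
    ← iteratedDeriv_eq_iterate, hg, iteratedDeriv_const_mul_field]

lemma iteratedDeriv_id_mul_double_root {g : 𝕜 → 𝕜} {b : 𝕜} (hg : ContDiff 𝕜 4 g)
    (hg2 : iteratedDeriv 2 g = fun x => -b * g x) (x : 𝕜) :
    iteratedDeriv 4 (fun y => y * g y) x + 2 * b * iteratedDeriv 2 (fun y => y * g y) x +
      b ^ 2 * (x * g x) = 0 := by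
  have leibniz_two : iteratedDeriv 2 (fun y => y * g y) x =
      x * iteratedDeriv 2 g x + 2 * iteratedDeriv 1 g x :=
    (iteratedDeriv_succ_id_mul 1 (hg.of_le (by norm_num)) x).trans (by norm_num)
  have leibniz_four : iteratedDeriv 4 (fun y => y * g y) x =
      x * iteratedDeriv 4 g x + 4 * iteratedDeriv 3 g x :=
    (iteratedDeriv_succ_id_mul 3 (hg.of_le (by norm_num)) x).trans (by norm_num)
  have hg_add_two := iteratedDeriv_add_two_of_iteratedDeriv_two_eq hg2
  rw [leibniz_two, leibniz_four, hg_add_two 2, hg_add_two 1, hg_add_two 0, iteratedDeriv_zero]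
  ring

end IteratedDeriv

lemma iteratedDeriv_two_sin_const_mul (a : ℝ) :
    iteratedDeriv 2 (fun x => sin (a * x)) = fun x => -a ^ 2 * sin (a * x) := by
  rw [iteratedDeriv_comp_const_mul contDiff_sin]
  simp

lemma iteratedDeriv_two_cos_const_mul (a : ℝ) :
    iteratedDeriv 2 (fun x => cos (a * x)) = fun x => -a ^ 2 * cos (a * x) := by
  rw [iteratedDeriv_comp_const_mul contDiff_cos]
  simp

lemma rpow_quarter_sq {c : ℝ} (hc : 0 ≤ c) : (c ^ ((1 : ℝ) / 4)) ^ 2 = √c := by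
  rw [sqrt_eq_rpow, ← rpow_mul_natCast hc]
  norm_num

/-- Critical data on an open set `U`: a nowhere vanishing function `H` with primitive `θ` such that
`2 + (H⁻²)'' = 2 - 2c` is constant. The second-order condition is split into two first-order ones
through `k = -(H⁻²)' / 2 = H' / H³`. -/
structure CriticalData (U : Set ℝ) (c : ℝ) (θ H k : ℝ → ℝ) : Prop where
  isOpen : IsOpen U
  ne_zero : ∀ ⦃s⦄, s ∈ U → H s ≠ 0
  hasDerivAt_angle : ∀ ⦃s⦄, s ∈ U → HasDerivAt θ (H s) s
  hasDerivAt : ∀ ⦃s⦄, s ∈ U → HasDerivAt H (k s * H s ^ 3) s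
  hasDerivAt_slope : ∀ ⦃s⦄, s ∈ U → HasDerivAt k c s

namespace CriticalData

variable {U : Set ℝ} {c : ℝ} {θ H k f : ℝ → ℝ} {N : WithTop ℕ∞} {s : ℝ}

lemma hasDerivAt_iteratedDeriv_comp (h : CriticalData U c θ H k) (hf : ContDiff ℝ N f) {n : ℕ}
    (hn : n < N) (hs : s ∈ U) :
    HasDerivAt (fun t => iteratedDeriv n f (θ t)) (iteratedDeriv (n + 1) f (θ s) * H s) s := by
  rw [iteratedDeriv_succ]
  exact (hf.differentiable_iteratedDeriv n hn (θ s)).hasDerivAt.comp s (h.hasDerivAt_angle hs)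

lemma eqOn_deriv_comp (h : CriticalData U c θ H k) (hf : Differentiable ℝ f) :
    EqOn (deriv fun t => f (θ t)) (fun t => iteratedDeriv 1 f (θ t) * H t) U := fun s hs => by
  rw [iteratedDeriv_one]
  exact ((hf (θ s)).hasDerivAt.comp s (h.hasDerivAt_angle hs)).deriv

lemma eqOn_deriv_deriv_comp (h : CriticalData U c θ H k) (hf : ContDiff ℝ 2 f) :
    EqOn (deriv (deriv fun t => f (θ t)))
      (fun t => iteratedDeriv 2 f (θ t) * H t ^ 2 + iteratedDeriv 1 f (θ t) * (k t * H t ^ 3))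
      U := fun s hs => by
  rw [(h.eqOn_deriv_comp (hf.differentiable (by norm_num))).deriv h.isOpen hs]
  have hf1 := h.hasDerivAt_iteratedDeriv_comp hf (n := 1) (by norm_num) hs
  refine (hf1.mul (h.hasDerivAt hs)).deriv.trans ?_
  ring

lemma deriv_two_div_mul_deriv_comp (h : CriticalData U c θ H k) (hf : ContDiff ℝ 2 f)
    (hs : s ∈ U) :
    deriv (fun t => 2 / H t * deriv (fun r => f (θ r)) t) s =
      2 * (iteratedDeriv 2 f (θ s) * H s) := by
  have weighted_deriv : EqOn (fun t => 2 / H t * deriv (fun r => f (θ r)) t)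
      (fun t => 2 * iteratedDeriv 1 f (θ t)) U := fun t ht => by
    have hHt := h.ne_zero ht
    simp only [h.eqOn_deriv_comp (hf.differentiable (by norm_num)) ht]
    field_simp
  rw [weighted_deriv.deriv h.isOpen hs]
  exact ((h.hasDerivAt_iteratedDeriv_comp hf (n := 1) (by norm_num) hs).const_mul 2).deriv

lemma eqOn_two_div_cube_mul_deriv_deriv_comp (h : CriticalData U c θ H k) (hf : ContDiff ℝ 2 f) :
    EqOn (fun t => 2 / H t ^ 3 * deriv (deriv fun r => f (θ r)) t)
      (fun t => 2 * (iteratedDeriv 2 f (θ t) * (H t)⁻¹ + iteratedDeriv 1 f (θ t) * k t))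
      U := fun t ht => by
  have hHt := h.ne_zero ht
  simp only [h.eqOn_deriv_deriv_comp hf ht]
  field_simp

-- The terms in `f''` cancel because `(H⁻¹)' = -k H`.
lemma eqOn_deriv_two_div_cube_mul_deriv_deriv_comp (h : CriticalData U c θ H k)
    (hf : ContDiff ℝ 3 f) :
    EqOn (deriv fun t => 2 / H t ^ 3 * deriv (deriv fun r => f (θ r)) t)
      (fun t => 2 * (iteratedDeriv 3 f (θ t) + c * iteratedDeriv 1 f (θ t))) U := fun s hs => by
  have hHs := h.ne_zero hs
  have hf1 := h.hasDerivAt_iteratedDeriv_comp hf (n := 1) (by norm_num) hs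
  have hf2 := h.hasDerivAt_iteratedDeriv_comp hf (n := 2) (by norm_num) hs
  have hH_inv : HasDerivAt (fun t => (H t)⁻¹) (-(k s * H s)) s :=
    ((h.hasDerivAt hs).fun_inv hHs).congr_deriv (by field_simp)
  rw [(h.eqOn_two_div_cube_mul_deriv_deriv_comp (hf.of_le (by norm_num))).deriv h.isOpen hs]
  refine (((hf2.mul hH_inv).add (hf1.mul (h.hasDerivAt_slope hs))).const_mul 2).deriv.trans ?_
  field_simp
  ring

lemma deriv_deriv_two_div_cube_mul_deriv_deriv_comp (h : CriticalData U c θ H k)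
    (hf : ContDiff ℝ 4 f) (hs : s ∈ U) :
    deriv (deriv fun t => 2 / H t ^ 3 * deriv (deriv fun r => f (θ r)) t) s =
      2 * (iteratedDeriv 4 f (θ s) * H s + c * (iteratedDeriv 2 f (θ s) * H s)) := by
  have hf1 := h.hasDerivAt_iteratedDeriv_comp hf (n := 1) (by norm_num) hs
  have hf3 := h.hasDerivAt_iteratedDeriv_comp hf (n := 3) (by norm_num) hs
  rw [(h.eqOn_deriv_two_div_cube_mul_deriv_deriv_comp (hf.of_le (by norm_num))).deriv h.isOpen hs]
  exact ((hf3.add (hf1.const_mul c)).const_mul 2).deriv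

end CriticalData

section Arcsin

variable {κ x : ℝ}

lemma sq_sub_sq_pos_of_mem_Ioo (hx : x ∈ Ioo (-κ) κ) : 0 < κ ^ 2 - x ^ 2 :=
  sub_pos.2 (sq_lt_sq' hx.1 hx.2)

lemma hasDerivAt_arcsin_div (hx : x ∈ Ioo (-κ) κ) :
    HasDerivAt (fun y => arcsin (y / κ)) (√(κ ^ 2 - x ^ 2))⁻¹ x := by
  have hκ : 0 < κ := by linarith [hx.1, hx.2]
  have hneg_one : x / κ ≠ -1 := ((lt_div_iff₀ hκ).2 (by linarith [hx.1])).ne'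
  have hone : x / κ ≠ 1 := ((div_lt_one hκ).2 hx.2).ne
  have hsqrt : √(1 - (x / κ) ^ 2) = √(κ ^ 2 - x ^ 2) / κ := by
    rw [← sqrt_sq hκ.le, ← sqrt_div' _ (sq_nonneg κ), sqrt_sq hκ.le]
    congr 1
    field_simp
  refine ((hasDerivAt_arcsin hneg_one hone).comp x
    ((hasDerivAt_id x).div_const κ)).congr_deriv ?_
  rw [hsqrt]
  field_simp

lemma hasDerivAt_sqrt_sq_sub_sq (hx : x ∈ Ioo (-κ) κ) :
    HasDerivAt (fun y => √(κ ^ 2 - y ^ 2)) (-x / √(κ ^ 2 - x ^ 2)) x := by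
  have hpos := sq_sub_sq_pos_of_mem_Ioo hx
  refine (((hasDerivAt_pow 2 x).const_sub (κ ^ 2)).sqrt hpos.ne').congr_deriv ?_
  field_simp
  norm_num

end Arcsin

section CriticalFamily

variable {x0 L s : ℝ}

lemma sub_mem_Ioo_kap (hs : s ∈ Ioo (L - kap x0 L) (L + kap x0 L)) :
    s - L ∈ Ioo (-kap x0 L) (kap x0 L) :=
  ⟨by linarith [hs.1], by linarith [hs.2]⟩

lemma hc_eq_inv (x0 L s : ℝ) :
    Hc x0 L s = (√(x0 / (L + x0)) * √(kap x0 L ^ 2 - (s - L) ^ 2))⁻¹ := by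
  rw [Hc, sig, mul_assoc, div_mul_cancel_left₀ pi_ne_zero]

lemma hc_pos (hc : 0 < x0 / (L + x0)) (hs : s ∈ Ioo (L - kap x0 L) (L + kap x0 L)) :
    0 < Hc x0 L s := by
  have hpos := sq_sub_sq_pos_of_mem_Ioo (sub_mem_Ioo_kap hs)
  rw [hc_eq_inv]
  positivity

lemma hasDerivAt_th (hs : s ∈ Ioo (L - kap x0 L) (L + kap x0 L)) :
    HasDerivAt (th x0 L) (Hc x0 L s) s := by
  have harcsin := (hasDerivAt_arcsin_div (sub_mem_Ioo_kap hs)).comp_sub_const s L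
  refine ((harcsin.add_const (sig x0 L)).const_mul (π / sig x0 L)).congr_deriv ?_
  rw [Hc, ← div_div, div_eq_mul_inv (π / sig x0 L)]

lemma hasDerivAt_hc (hc : 0 < x0 / (L + x0))
    (hs : s ∈ Ioo (L - kap x0 L) (L + kap x0 L)) :
    HasDerivAt (Hc x0 L) (x0 / (L + x0) * (s - L) * Hc x0 L s ^ 3) s := by
  have hpos := sq_sub_sq_pos_of_mem_Ioo (sub_mem_Ioo_kap hs)
  have hsqrt := (hasDerivAt_sqrt_sq_sub_sq (sub_mem_Ioo_kap hs)).comp_sub_const s L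
  rw [funext (hc_eq_inv x0 L)]
  refine ((hsqrt.const_mul √(x0 / (L + x0))).fun_inv (by positivity)).congr_deriv ?_
  nth_rewrite 3 [← sq_sqrt hc.le]
  have hroot := sqrt_pos.2 hc
  generalize √(x0 / (L + x0)) = q at *
  field_simp

lemma criticalData_th_hc (hc : 0 < x0 / (L + x0)) :
    CriticalData (Ioo (L - kap x0 L) (L + kap x0 L)) (x0 / (L + x0)) (th x0 L) (Hc x0 L)
      (fun s => x0 / (L + x0) * (s - L)) where
  isOpen := isOpen_Ioo
  ne_zero _ hs := (hc_pos hc hs).ne'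
  hasDerivAt_angle _ hs := hasDerivAt_th hs
  hasDerivAt _ hs := hasDerivAt_hc hc hs
  hasDerivAt_slope s _ := by
    simpa using ((hasDerivAt_id s).sub_const L).const_mul (x0 / (L + x0))

lemma lop_comp_th (hc : 0 < x0 / (L + x0)) (hs : s ∈ Ioo (L - kap x0 L) (L + kap x0 L)) (μ : ℝ)
    {f : ℝ → ℝ} (hf : ContDiff ℝ 4 f) :
    Lop x0 L μ (fun r => f (th x0 L r)) s =
      2 * Hc x0 L s * (iteratedDeriv 4 f (th x0 L s) +
        (x0 / (L + x0) + μ) * iteratedDeriv 2 f (th x0 L s) +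
        x0 / (L + x0) * f (th x0 L s)) := by
  have hcrit := criticalData_th_hc hc
  have two_sub_lambda : 2 - 2 * L / (L + x0) = 2 * (x0 / (L + x0)) := by
    have hL : L + x0 ≠ 0 := fun h => by simp [h] at hc
    field_simp
    ring
  rw [Lop, hcrit.deriv_deriv_two_div_cube_mul_deriv_deriv_comp hf hs,
    hcrit.deriv_two_div_mul_deriv_comp (hf.of_le (by norm_num)) hs, two_sub_lambda]
  ring

lemma lop_th_mul_comp_th (hc : 0 < x0 / (L + x0))
    (hs : s ∈ Ioo (L - kap x0 L) (L + kap x0 L)) {g : ℝ → ℝ} (hg : ContDiff ℝ 4 g)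
    (hg2 : iteratedDeriv 2 g = fun x => -√(x0 / (L + x0)) * g x) :
    Lop x0 L (-(x0 / (L + x0)) + 2 * √(x0 / (L + x0)))
      (fun r => th x0 L r * g (th x0 L r)) s = 0 := by
  have hdouble := iteratedDeriv_id_mul_double_root hg hg2 (th x0 L s)
  rw [sq_sqrt hc.le] at hdouble
  rw [lop_comp_th hc hs _ (f := fun x => x * g x) (contDiff_id.mul hg)]
  linear_combination 2 * Hc x0 L s * hdouble

lemma le_kap (hx0 : 0 < x0) (hL : 0 < L) : L ≤ kap x0 L := by
  have hsqrt : √(x0 / (L + x0)) < 1 := by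
    rw [sqrt_lt' one_pos, one_pow, div_lt_one (by positivity)]
    linarith
  have hsig : sig x0 L < π := mul_lt_of_lt_one_right pi_pos hsqrt
  have hsin : 0 < sin (sig x0 L) := sin_pos_of_pos_of_lt_pi (by unfold sig; positivity) hsig
  exact le_div_self hL.le hsin (sin_le_one _)

lemma Ioo_subset_Ioo_kap (hx0 : 0 < x0) (hL : 0 < L) :
    Ioo 0 (2 * L) ⊆ Ioo (L - kap x0 L) (L + kap x0 L) :=
  Ioo_subset_Ioo (by linarith [le_kap hx0 hL]) (by linarith [le_kap hx0 hL])

end CriticalFamily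

theorem statement14_general {x0 L s : ℝ} (hc : 0 < x0 / (L + x0))
    (hs : s ∈ Ioo (L - kap x0 L) (L + kap x0 L)) :
    Lop x0 L (-(x0 / (L + x0)) + 2 * √(x0 / (L + x0)))
        (fun r => th x0 L r * sin ((x0 / (L + x0)) ^ ((1 : ℝ) / 4) * th x0 L r)) s = 0 ∧
      Lop x0 L (-(x0 / (L + x0)) + 2 * √(x0 / (L + x0)))
        (fun r => th x0 L r * cos ((x0 / (L + x0)) ^ ((1 : ℝ) / 4) * th x0 L r)) s = 0 := by
  have hα := rpow_quarter_sq hc.le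
  set α := (x0 / (L + x0)) ^ ((1 : ℝ) / 4)
  constructor
  · exact lop_th_mul_comp_th hc hs (g := fun x => sin (α * x)) (by fun_prop)
      (hα ▸ iteratedDeriv_two_sin_const_mul α)
  · exact lop_th_mul_comp_th hc hs (g := fun x => cos (α * x)) (by fun_prop)
      (hα ▸ iteratedDeriv_two_cos_const_mul α)

/-- in the critical case `μ₀ = −x₀/(L+x₀) + 2√(x₀/(L+x₀))`, with
`α = (x₀/(L+x₀))^{1/4}`, the functions `θ sin(αθ)` and `θ cos(αθ)` solve the homogeneous
stability equation. -/
theorem statement14 (x0 L : ℝ) (hx0 : 0 < x0) (hL : 3 * x0 < L) :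
    ∀ s ∈ Set.Ioo (0:ℝ) (2 * L),
      Lop x0 L (-(x0 / (L + x0)) + 2 * Real.sqrt (x0 / (L + x0)))
          (fun r => th x0 L r *
            Real.sin ((x0 / (L + x0)) ^ ((1:ℝ) / 4) * th x0 L r)) s = 0 ∧
      Lop x0 L (-(x0 / (L + x0)) + 2 * Real.sqrt (x0 / (L + x0)))
          (fun r => th x0 L r *
            Real.cos ((x0 / (L + x0)) ^ ((1:ℝ) / 4) * th x0 L r)) s = 0 := by
  intro s hs
  have hL_pos : 0 < L := by linarith
  exact statement14_general (by positivity) (Ioo_subset_Ioo_kap hx0 hL_pos hs)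
end
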